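/- Let d ≥ 2 and let C = hO^d be a convex body with Vol(C) = |det h| = 1. Then the infimum over all unimodular lattices Λ ⊆ K̃^d of CovRad_C(Λ) equals 1/q, and this infimum is attained (for example by Λ = hR^d). -/

import Mathlib

noncomputable section

open scoped Classical

variable (Fq : Type) [Field Fq] [Fintype Fq]

/-- `K̃ = 𝔽_q((x⁻¹))`, realized as formal Laurent series in `t = x⁻¹`. -/
abbrev Kt := LaurentSeries Fq

/-- The element `x` of `K̃` (the inverse of the Laurent series variable). -/
def Kx : Kt Fq := HahnSeries.single (-1 : ℤ) 1

/-- Absolute value `|f| = q^{deg f}`, i.e. `q^{-order f}` in terms of `t = x⁻¹`. -/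
def Kabs (f : Kt Fq) : ℝ := if f = 0 then 0 else (Fintype.card Fq : ℝ) ^ (-f.order)

/-- The ring embedding of `R = 𝔽_q[x]` into `K̃`. -/
def polyK : Polynomial Fq →+* Kt Fq := (Polynomial.aeval (Kx Fq)).toRingHom

/-- Sup norm on `K̃^d`. -/
def vnorm {d : ℕ} (v : Fin d → Kt Fq) : ℝ := ⨆ i, Kabs Fq (v i)

/-- The lattice `g·R^d`. -/
def lattice {d : ℕ} (g : Matrix (Fin d) (Fin d) (Kt Fq)) : Set (Fin d → Kt Fq) :=
  {v | ∃ c : Fin d → Polynomial Fq, v = g.mulVec fun j => polyK Fq (c j)}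

/-- `i`-th successive minimum of `Λ` with respect to a norm `nrm`: the least `r > 0` such that
`Λ` contains `i` linearly independent vectors of norm at most `r`. -/
def minimaN {d : ℕ} (nrm : (Fin d → Kt Fq) → ℝ) (Λ : Set (Fin d → Kt Fq)) (i : ℕ) : ℝ :=
  sInf {r : ℝ | 0 < r ∧ ∃ v : Fin i → Fin d → Kt Fq,
    (∀ j, v j ∈ Λ) ∧ LinearIndependent (Kt Fq) v ∧ ∀ j, nrm (v j) ≤ r}

/-- `i`-th successive minimum with respect to the sup norm. -/
def minima {d : ℕ} (Λ : Set (Fin d → Kt Fq)) (i : ℕ) : ℝ := minimaN Fq (vnorm Fq) Λ i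

/-- Covering radius of `Λ` with respect to the norm `nrm`. -/
def covRad {d : ℕ} (nrm : (Fin d → Kt Fq) → ℝ) (Λ : Set (Fin d → Kt Fq)) : ℝ :=
  ⨆ w : Fin d → Kt Fq, ⨅ u : Λ, nrm (w - u.1)

/-- Length of the shortest nonzero vector of `Λ`. -/
def ell {d : ℕ} (Λ : Set (Fin d → Kt Fq)) : ℝ :=
  sInf {r : ℝ | ∃ v ∈ Λ, v ≠ 0 ∧ vnorm Fq v = r}

/-- `Λ` is well rounded: it contains `d` linearly independent vectors of norm `ℓ(Λ)`. -/
def IsWellRounded {d : ℕ} (Λ : Set (Fin d → Kt Fq)) : Prop :=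
  ∃ v : Fin d → Fin d → Kt Fq, (∀ j, v j ∈ Λ) ∧ LinearIndependent (Kt Fq) v ∧
    ∀ j, vnorm Fq (v j) = ell Fq Λ

/-- The multiplicative "norm" `N(v) = ∏ |v i|`. -/
def Nprod {d : ℕ} (v : Fin d → Kt Fq) : ℝ := ∏ i, Kabs Fq (v i)

/-- The Minkowski function `μ(Λ) = sup_w inf_{u ∈ Λ} N(w - u)`. -/
def mink {d : ℕ} (Λ : Set (Fin d → Kt Fq)) : ℝ :=
  ⨆ w : Fin d → Kt Fq, ⨅ u : Λ, Nprod Fq (w - u.1)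


section helpers

set_option linter.unusedSectionVars false

variable {F : Type} [Field F] [Fintype F]

/-- all coefficients of index `< k` vanish -/
def Tz (k : ℤ) (f : Kt F) : Prop := ∀ m < k, f.coeff m = 0

theorem Tz_iff (k : ℤ) (f : Kt F) :
    Tz k f ↔ ∃ p : PowerSeries F, f = HahnSeries.single k 1 * HahnSeries.ofPowerSeries ℤ F p := by
  constructor
  · intro hf
    refine ⟨PowerSeries.mk fun n => f.coeff (n + k), ?_⟩
    ext m
    rw [HahnSeries.coeff_single_mul, PowerSeries.coeff_coe, one_mul]
    split_ifs with hm
    · exact hf m (by omega)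
    · rw [PowerSeries.coeff_mk]
      congr 1
      omega
  · rintro ⟨p, rfl⟩ m hm
    rw [HahnSeries.coeff_single_mul, PowerSeries.coeff_coe, if_pos (by omega), mul_zero]

theorem one_lt_q : (1 : ℝ) < (Fintype.card F : ℝ) := by
  exact_mod_cast Fintype.one_lt_card

theorem Kabs_nonneg (f : Kt F) : 0 ≤ Kabs F f := by
  unfold Kabs
  split_ifs
  · exact le_rfl
  · positivity

theorem Kabs_le_of_Tz {k : ℤ} {f : Kt F} (hf : Tz k f) :
    Kabs F f ≤ (Fintype.card F : ℝ) ^ (-k) := by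
  unfold Kabs
  split_ifs with h0
  · positivity
  · apply zpow_le_zpow_right₀ one_lt_q.le
    have : ¬ f.order < k := fun hlt => h0 (HahnSeries.coeff_order_eq_zero.1 (hf _ hlt))
    omega

theorem le_Kabs {k : ℤ} {f : Kt F} (hf : f.coeff k ≠ 0) :
    (Fintype.card F : ℝ) ^ (-k) ≤ Kabs F f := by
  unfold Kabs
  rw [if_neg (by rintro rfl; simp at hf)]
  apply zpow_le_zpow_right₀ one_lt_q.le
  have := HahnSeries.order_le_of_coeff_ne_zero hf
  omega

theorem Tz_of_Kabs_lt {k : ℤ} {f : Kt F} (hf : Kabs F f < (Fintype.card F : ℝ) ^ (-k)) :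
    Tz (k + 1) f := by
  intro m hm
  by_contra hne
  have h1 := le_Kabs hne
  have h2 : (Fintype.card F : ℝ) ^ (-k) ≤ (Fintype.card F : ℝ) ^ (-m) :=
    zpow_le_zpow_right₀ one_lt_q.le (by omega)
  linarith

theorem order_of_Kabs_one {f : Kt F} (hf : Kabs F f = 1) : f ≠ 0 ∧ f.order = 0 := by
  unfold Kabs at hf
  split_ifs at hf with h0
  · simp at hf
  · refine ⟨h0, ?_⟩
    have := (zpow_eq_one_iff_right₀ (by positivity) (one_lt_q (F := F)).ne').1 hf
    omega

theorem polyK_monomial (n : ℕ) (a : F) :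
    polyK F (Polynomial.monomial n a) = HahnSeries.single (-(n : ℤ)) a := by
  have e : algebraMap F (Kt F) a = HahnSeries.single 0 a := by
    rw [HahnSeries.algebraMap_apply']
    simp
  simp [polyK, Kx, Polynomial.aeval_monomial, HahnSeries.single_pow, e]

theorem polyK_coeff (p : Polynomial F) (m : ℤ) :
    (polyK F p).coeff m = if m ≤ 0 then p.coeff (-m).toNat else 0 := by
  induction p using Polynomial.induction_on' with
  | add p q hp hq =>
    rw [map_add, HahnSeries.coeff_add, hp, hq]
    split_ifs <;> simp
  | monomial n a =>
    rw [polyK_monomial, HahnSeries.coeff_single, Polynomial.coeff_monomial]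
    split_ifs <;> first | rfl | (exfalso; omega)

theorem exists_frac (f : Kt F) : ∃ p : Polynomial F, Tz 1 (f - polyK F p) := by
  refine ⟨∑ i ∈ Finset.range ((-f.order).toNat + 1), Polynomial.monomial i (f.coeff (-(i : ℤ))), ?_⟩
  intro m hm
  rw [HahnSeries.coeff_sub, polyK_coeff, if_pos (by omega), Polynomial.finsetSum_coeff]
  simp only [Polynomial.coeff_monomial]
  rw [Finset.sum_ite_eq' (Finset.range _) ((-m).toNat)]
  split_ifs with h
  · rw [show -(((-m).toNat : ℕ) : ℤ) = m by omega, sub_self]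
  · rw [Finset.mem_range] at h
    rw [HahnSeries.coeff_eq_zero_of_lt_order (by omega), sub_zero]

theorem Kabs_le_vnorm {d : ℕ} (v : Fin d → Kt F) (i : Fin d) : Kabs F (v i) ≤ vnorm F v :=
  le_ciSup (f := fun i => Kabs F (v i)) (Set.finite_range _).bddAbove i

theorem vnorm_nonneg {d : ℕ} (v : Fin d → Kt F) : 0 ≤ vnorm F v :=
  Real.iSup_nonneg fun i => Kabs_nonneg _

theorem vnorm_le {d : ℕ} (hd : 2 ≤ d) {v : Fin d → Kt F} {k : ℤ} (hv : ∀ i, Tz k (v i)) :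
    vnorm F v ≤ (Fintype.card F : ℝ) ^ (-k) := by
  have : Nonempty (Fin d) := ⟨⟨0, by omega⟩⟩
  exact ciSup_le fun i => Kabs_le_of_Tz (hv i)

theorem Tz_sum {ι : Type*} (s : Finset ι) {k : ℤ} {f : ι → Kt F} (hf : ∀ i ∈ s, Tz k (f i)) :
    Tz k (∑ i ∈ s, f i) := by
  intro m hm
  rw [HahnSeries.coeff_sum]
  exact Finset.sum_eq_zero fun i hi => hf i hi m hm

theorem Tz_mul {k l : ℤ} {f g : Kt F} (hf : Tz k f) (hg : Tz l g) : Tz (k + l) (f * g) := by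
  rw [Tz_iff] at *
  obtain ⟨p, rfl⟩ := hf
  obtain ⟨r, rfl⟩ := hg
  refine ⟨p * r, ?_⟩
  rw [map_mul, mul_mul_mul_comm, HahnSeries.single_mul_single, one_mul]

theorem Tz_order (f : Kt F) : Tz f.order f := fun _ hm => HahnSeries.coeff_eq_zero_of_lt_order hm

theorem Tz_mono {k l : ℤ} (h : k ≤ l) {f : Kt F} (hf : Tz l f) : Tz k f :=
  fun m hm => hf m (by omega)

theorem exists_Tz_matrix {d : ℕ} (A : Matrix (Fin d) (Fin d) (Kt F)) :
    ∃ M : ℕ, ∀ i j, Tz (-(M : ℤ)) (A i j) := by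
  refine ⟨∑ i, ∑ j, (A i j).order.natAbs, fun i j => Tz_mono ?_ (Tz_order _)⟩
  have h1 : (A i j).order.natAbs ≤ ∑ j, (A i j).order.natAbs :=
    Finset.single_le_sum (f := fun j => (A i j).order.natAbs) (fun _ _ => Nat.zero_le _)
      (Finset.mem_univ j)
  have h2 : ∑ j, (A i j).order.natAbs ≤ ∑ i, ∑ j, (A i j).order.natAbs :=
    Finset.single_le_sum (f := fun i => ∑ j, (A i j).order.natAbs) (fun _ _ => Nat.zero_le _)
      (Finset.mem_univ i)
  omega

local notation "ps" => HahnSeries.ofPowerSeries ℤ _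

theorem ps_C (a : F) : (ps (PowerSeries.C a) : Kt F) = HahnSeries.single 0 a := by
  rw [HahnSeries.ofPowerSeries_C]; rfl

theorem mink_base {d : ℕ} (P : Matrix (Fin d) (Fin d) (PowerSeries F))
    (n : Fin d → ℤ) (j : Fin d) (hj : n j ≤ 0) :
    ∃ c : Fin d → Polynomial F, c ≠ 0 ∧ ∀ i,
      Tz 0 (∑ j, ps (P i j) * HahnSeries.single (-(n j)) (1 : F) * polyK F (c j)) := by
  refine ⟨Pi.single j 1, by simp, fun i => ?_⟩
  rw [Finset.sum_eq_single j]
  · simp only [Pi.single_eq_same, map_one, mul_one]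
    exact Tz_mono (by omega) ((Tz_iff (-(n j)) _).2 ⟨P i j, mul_comm _ _⟩)
  · intro b _ hb
    simp [Pi.single_eq_of_ne hb]
  · simp

/-- the reduction step: a Minkowski-type theorem. -/
theorem mink_aux {d : ℕ} (hd : 2 ≤ d) (N : ℕ) : ∀ (P : Matrix (Fin d) (Fin d) (PowerSeries F))
    (n : Fin d → ℤ), PowerSeries.X ^ N ∣ P.det → ∑ j, n j ≤ N →
    ∃ c : Fin d → Polynomial F, c ≠ 0 ∧ ∀ i,
      Tz 0 (∑ j, ps (P i j) * HahnSeries.single (-(n j)) (1 : F) * polyK F (c j)) := by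
  have : Nonempty (Fin d) := ⟨⟨0, by omega⟩⟩
  induction N with
  | zero =>
    intro P n _ hn
    by_cases hex : ∃ j, n j ≤ 0
    · obtain ⟨j, hj⟩ := hex
      exact mink_base P n j hj
    · push Not at hex
      have : 0 < ∑ j, n j := Finset.sum_pos (fun j _ => hex j) Finset.univ_nonempty
      simp at hn
      omega
  | succ N ih =>
    intro P n hP hn
    have hdet : ((PowerSeries.constantCoeff (R := F)).mapMatrix P).det = 0 := by
      rw [← RingHom.map_det, ← PowerSeries.X_dvd_iff]
      exact (dvd_pow_self _ (Nat.succ_ne_zero N)).trans hP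
    obtain ⟨α, hα0, hα⟩ := Matrix.exists_mulVec_eq_zero_iff.2 hdet
    have hne : (Finset.univ.filter fun j => α j ≠ 0).Nonempty := by
      obtain ⟨j, hj⟩ := Function.ne_iff.1 hα0
      exact ⟨j, by simpa using hj⟩
    obtain ⟨j0, hj0, hmax⟩ := Finset.exists_max_image _ n hne
    simp only [Finset.mem_filter, Finset.mem_univ, true_and] at hj0 hmax
    have hcol : ∀ i, ∃ r : PowerSeries F,
        ∑ j, PowerSeries.C (α j) * P i j = PowerSeries.X * r := by
      intro i
      change (PowerSeries.X : PowerSeries F) ∣ _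
      rw [PowerSeries.X_dvd_iff, map_sum]
      have := congrFun hα i
      simp only [Matrix.mulVec, dotProduct, RingHom.mapMatrix_apply, Matrix.map_apply,
        Pi.zero_apply] at this
      rw [← this]
      refine Finset.sum_congr rfl fun j _ => ?_
      rw [map_mul, PowerSeries.constantCoeff_C, mul_comm]
    choose r hr using hcol
    have hdet2 : PowerSeries.X * (P.updateCol j0 r).det = PowerSeries.C (α j0) * P.det := by
      rw [← Matrix.det_updateCol_smul, ← smul_eq_mul (PowerSeries.C (α j0)),
        ← Matrix.det_updateCol_sum P j0 (fun j => PowerSeries.C (α j))]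
      congr 2
      ext1 i
      simp only [smul_eq_mul, Pi.smul_apply]
      exact (hr i).symm
    have hP' : PowerSeries.X ^ N ∣ (P.updateCol j0 r).det := by
      have h1 : PowerSeries.X * PowerSeries.X ^ N ∣ PowerSeries.X * (P.updateCol j0 r).det := by
        rw [hdet2, ← pow_succ']
        exact hP.mul_left _
      exact (mul_dvd_mul_iff_left PowerSeries.X_ne_zero).1 h1
    have hn' : ∑ j, (Function.update n j0 (n j0 - 1)) j ≤ N := by
      rw [Finset.sum_update_of_mem (Finset.mem_univ _)]
      have := Finset.sum_sdiff (Finset.subset_univ ({j0} : Finset (Fin d))) (f := n)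
      rw [Finset.sum_singleton] at this
      push_cast at hn
      omega
    obtain ⟨c, hc0, hc⟩ := ih _ _ hP' hn'
    refine ⟨fun j => (if j = j0 then 0 else c j) +
      Polynomial.monomial (n j0 - n j).toNat (α j) * c j0, ?_, fun i => ?_⟩
    · intro h0
      have hcj0 : c j0 = 0 := by
        have := congrFun h0 j0
        simpa [hj0] using this
      apply hc0
      ext1 j
      by_cases hj : j = j0
      · rw [hj, hcj0]; rfl
      · have := congrFun h0 j
        simpa [hj, hcj0] using this
    · convert hc i using 1
      have e1 : ∀ j, ps (P i j) * HahnSeries.single (-(n j)) (1 : F) *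
          polyK F ((if j = j0 then 0 else c j) +
            Polynomial.monomial (n j0 - n j).toNat (α j) * c j0) =
          (if j = j0 then 0 else ps (P i j) * HahnSeries.single (-(n j)) (1 : F) * polyK F (c j))
          + ps (PowerSeries.C (α j) * P i j) *
            (HahnSeries.single (-(n j0)) (1 : F) * polyK F (c j0)) := by
        intro j
        rw [map_add, mul_add]
        congr 1
        · split_ifs <;> simp
        · rw [map_mul, map_mul, polyK_monomial, ps_C]
          by_cases hz : α j = 0
          · simp [hz]
          · have hle := hmax j hz
            have e2 : (HahnSeries.single (-(n j)) (1 : F) : Kt F) *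
                HahnSeries.single (-((n j0 - n j).toNat : ℤ)) (α j) =
                HahnSeries.single 0 (α j) * HahnSeries.single (-(n j0)) (1 : F) := by
              rw [HahnSeries.single_mul_single, HahnSeries.single_mul_single, one_mul, mul_one]
              congr 2
              omega
            linear_combination (ps (P i j) : Kt F) * polyK F (c j0) * e2
      rw [Finset.sum_congr rfl fun j _ => e1 j, Finset.sum_add_distrib, ← Finset.sum_mul,
        ← map_sum, hr i, ← Finset.add_sum_erase _ _ (Finset.mem_univ j0),
        ← Finset.add_sum_erase (a := j0) _
          (fun j => ps (P.updateCol j0 r i j) * _ * polyK F (c j)) (Finset.mem_univ j0)]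
      rw [if_pos rfl, zero_add, add_comm]
      congr 1
      · rw [Matrix.updateCol_self, Function.update_self, map_mul, HahnSeries.ofPowerSeries_X]
        have e3 : (HahnSeries.single (-(n j0 - 1)) (1 : F) : Kt F) =
            HahnSeries.single 1 1 * HahnSeries.single (-(n j0)) (1 : F) := by
          rw [HahnSeries.single_mul_single, one_mul]
          congr 2
          omega
        rw [e3]
        ring
      · refine Finset.sum_congr rfl fun j hj => ?_
        have hj' := Finset.ne_of_mem_erase hj
        rw [if_neg hj', Matrix.updateCol_ne hj', Function.update_of_ne hj']

theorem mink_thm {d : ℕ} (hd : 2 ≤ d) (B : Matrix (Fin d) (Fin d) (Kt F)) (hB : Tz 0 B.det) :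
    ∃ c : Fin d → Polynomial F, c ≠ 0 ∧ ∀ i, Tz 0 (B.mulVec (fun j => polyK F (c j)) i) := by
  obtain ⟨M, hM⟩ := exists_Tz_matrix B
  simp only [Tz_iff (-(M : ℤ))] at hM
  choose P hP using hM
  have hBP : B = (HahnSeries.single (-(M : ℤ)) (1 : F) : Kt F) •
      (HahnSeries.ofPowerSeries ℤ F).mapMatrix (Matrix.of P) := by
    ext1 i j
    rw [hP]
    rfl
  have hdet : B.det = HahnSeries.single (-(M * d : ℤ)) (1 : F) *
      HahnSeries.ofPowerSeries ℤ F (Matrix.of P).det := by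
    rw [RingHom.map_det, hBP, Matrix.det_smul, HahnSeries.single_pow]
    simp [mul_comm]
  obtain ⟨c, hc0, hc⟩ := mink_aux hd (M * d) (Matrix.of P) (fun _ => (M : ℤ)) (by
    rw [PowerSeries.X_pow_dvd_iff]
    intro m hm
    have h1 := hB ((m : ℤ) - M * d) (by
      have : (m : ℤ) < ((M * d : ℕ) : ℤ) := by exact_mod_cast hm
      push_cast at this
      omega)
    rw [hdet, HahnSeries.coeff_single_mul, PowerSeries.coeff_coe, one_mul] at h1
    simpa using h1) (by simp [mul_comm])
  refine ⟨c, hc0, fun i => ?_⟩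
  convert hc i using 1
  rw [Matrix.mulVec, dotProduct]
  refine Finset.sum_congr rfl fun j _ => ?_
  rw [hP i j, Matrix.of_apply, mul_comm (HahnSeries.single _ _)]

theorem Tz_mulVec {d : ℕ} {k l : ℤ} {A : Matrix (Fin d) (Fin d) (Kt F)} {v : Fin d → Kt F}
    (hA : ∀ i j, Tz k (A i j)) (hv : ∀ i, Tz l (v i)) (i : Fin d) :
    Tz (k + l) (A.mulVec v i) :=
  Tz_sum _ fun j _ => Tz_mul (hA i j) (hv j)

/-- the infimum in the covering radius is at most any value on the lattice -/
theorem inf_le {d : ℕ} (h g : Matrix (Fin d) (Fin d) (Kt F)) (w : Fin d → Kt F)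
    (u : lattice F g) :
    ⨅ u : lattice F g, vnorm F (h⁻¹.mulVec (w - u.1)) ≤ vnorm F (h⁻¹.mulVec (w - u.1)) :=
  ciInf_le (f := fun u : lattice F g => vnorm F (h⁻¹.mulVec (w - u.1)))
    ⟨0, by rintro _ ⟨u, rfl⟩; exact vnorm_nonneg _⟩ u

theorem inf_bound {d : ℕ} (hd : 2 ≤ d) (h g : Matrix (Fin d) (Fin d) (Kt F))
    (hg : g.det ≠ 0) (k : ℤ) (hk : ∀ i j, Tz k ((h⁻¹ * g) i j)) (w : Fin d → Kt F) :
    ⨅ u : lattice F g, vnorm F (h⁻¹.mulVec (w - u.1)) ≤ (Fintype.card F : ℝ) ^ (-(k + 1)) := by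
  choose c hc using fun i => exists_frac (g⁻¹.mulVec w i)
  refine (inf_le h g w ⟨_, c, rfl⟩).trans (vnorm_le hd fun i => ?_)
  have e : h⁻¹.mulVec (w - g.mulVec fun j => polyK F (c j)) =
      (h⁻¹ * g).mulVec (g⁻¹.mulVec w - fun j => polyK F (c j)) := by
    rw [← Matrix.mulVec_mulVec, Matrix.mulVec_sub g, Matrix.mulVec_mulVec w g g⁻¹,
      Matrix.mul_nonsing_inv _ (isUnit_iff_ne_zero.2 hg), Matrix.one_mulVec]
  rw [e]
  exact Tz_mulVec hk hc i

theorem lower {d : ℕ} (hd : 2 ≤ d) (h g : Matrix (Fin d) (Fin d) (Kt F))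
    (hh : Kabs F h.det = 1) (hg : Kabs F g.det = 1) :
    (Fintype.card F : ℝ)⁻¹ ≤ covRad F (fun v => vnorm F (h⁻¹.mulVec v)) (lattice F g) := by
  obtain ⟨hh0, hho⟩ := order_of_Kabs_one hh
  obtain ⟨hg0, hgo⟩ := order_of_Kabs_one hg
  obtain ⟨M, hM⟩ := exists_Tz_matrix (h⁻¹ * g)
  have hB : Tz 0 ((g⁻¹ * h).transpose).det := by
    have e : ((g⁻¹ * h).transpose).det * g.det = h.det := by
      rw [Matrix.det_transpose, Matrix.det_mul, mul_right_comm, ← Matrix.det_mul,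
        Matrix.nonsing_inv_mul _ (isUnit_iff_ne_zero.2 hg0), Matrix.det_one, one_mul]
    have hne : ((g⁻¹ * h).transpose).det ≠ 0 := by
      intro h0
      rw [h0, zero_mul] at e
      exact hh0 e.symm
    have := HahnSeries.order_mul hne hg0
    rw [e, hho, hgo, add_zero] at this
    exact this ▸ Tz_order _
  obtain ⟨c, hc0, hc⟩ := mink_thm hd _ hB
  obtain ⟨i0, hi0⟩ := Function.ne_iff.1 hc0
  have hinj : polyK F (c i0) ≠ 0 := by
    intro h0
    apply hi0
    ext n
    have := congrArg (fun f : Kt F => f.coeff (-(n : ℤ))) h0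
    simp only [polyK_coeff] at this
    simpa using this
  set w : Fin d → Kt F := Pi.single i0 (HahnSeries.single 1 1 * (polyK F (c i0))⁻¹) with hw
  have hbdd : BddAbove (Set.range fun w : Fin d → Kt F =>
      ⨅ u : lattice F g, vnorm F (h⁻¹.mulVec (w - u.1))) :=
    ⟨_, by rintro _ ⟨w, rfl⟩; exact inf_bound hd h g hg0 _ hM w⟩
  refine le_trans ?_ (le_ciSup hbdd (g.mulVec w))
  have : Nonempty (lattice F g) := ⟨⟨_, 0, rfl⟩⟩
  refine le_ciInf ?_
  rintro ⟨_, u, rfl⟩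
  by_contra hlt
  rw [not_le] at hlt
  have hz : ∀ i, Tz (1 + 1) (h⁻¹.mulVec (g.mulVec w - g.mulVec fun j => polyK F (u j)) i) := by
    intro i
    apply Tz_of_Kabs_lt
    rw [zpow_neg_one]
    exact (Kabs_le_vnorm _ i).trans_lt hlt
  have hT : Tz (0 + (1 + 1)) (((g⁻¹ * h).transpose.mulVec fun j => polyK F (c j)) ⬝ᵥ
      (h⁻¹.mulVec (g.mulVec w - g.mulVec fun j => polyK F (u j)))) :=
    Tz_sum _ fun i _ => Tz_mul (hc i) (hz i)
  have e : ((g⁻¹ * h).transpose.mulVec fun j => polyK F (c j)) ⬝ᵥ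
      (h⁻¹.mulVec (g.mulVec w - g.mulVec fun j => polyK F (u j))) =
      HahnSeries.single 1 1 - polyK F (∑ j, c j * u j) := by
    rw [Matrix.mulVec_transpose, ← Matrix.dotProduct_mulVec, Matrix.mulVec_mulVec,
      ← Matrix.mulVec_sub, Matrix.mulVec_mulVec, Matrix.mul_assoc g⁻¹,
      Matrix.mul_nonsing_inv _ (isUnit_iff_ne_zero.2 hh0), Matrix.mul_one,
      Matrix.nonsing_inv_mul _ (isUnit_iff_ne_zero.2 hg0), Matrix.one_mulVec, dotProduct_sub,
      hw, dotProduct_single, map_sum]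
    congr 1
    · field_simp
    · simp [dotProduct]
  have h1 := hT 1 (by norm_num)
  rw [e, HahnSeries.coeff_sub, polyK_coeff] at h1
  simp at h1

theorem attained {d : ℕ} (hd : 2 ≤ d) (h : Matrix (Fin d) (Fin d) (Kt F))
    (hh : Kabs F h.det = 1) :
    covRad F (fun v => vnorm F (h⁻¹.mulVec v)) (lattice F h) ≤ (Fintype.card F : ℝ)⁻¹ := by
  have hh0 := (order_of_Kabs_one hh).1
  refine ciSup_le fun w => ?_
  refine (inf_bound hd h h hh0 0 (fun i j m hm => ?_) w).trans (by simp)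
  rw [Matrix.nonsing_inv_mul _ (isUnit_iff_ne_zero.2 hh0), Matrix.one_apply]
  split_ifs
  · rw [HahnSeries.coeff_one, if_neg (by omega)]
  · simp

end helpers

/-- For a convex body `C = hO^d` of volume `1`, the infimum of
`CovRad_C(Λ)` over unimodular lattices `Λ` equals `1/q` and is attained. -/
theorem inf_covRad_convex_body {d : ℕ} (hd : 2 ≤ d)
    (h : Matrix (Fin d) (Fin d) (Kt Fq)) (hh : Kabs Fq h.det = 1) :
    IsLeast {r : ℝ | ∃ g : Matrix (Fin d) (Fin d) (Kt Fq), Kabs Fq g.det = 1 ∧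
        r = covRad Fq (fun v => vnorm Fq (h⁻¹.mulVec v)) (lattice Fq g)}
      (Fintype.card Fq : ℝ)⁻¹ := by
  refine ⟨⟨h, hh, le_antisymm (lower hd h h hh hh) (attained hd h hh)⟩, ?_⟩
  rintro _ ⟨g, hg, rfl⟩
  exact lower hd h g hh hg
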